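/- Let a₁, …, aₙ be vertices of a convex polygon in clockwise order and let d_k be the k-th largest pairwise distance. For a fixed residue r mod n, consider the 'level' L_r consisting of all diagonals a_j a_m with j + m ≡ r (mod n). Then at most 2k − 1 diagonals in L_r have length ≥ d_k. -/

import Mathlib

/-- The cross product (signed area determinant) of two vectors in the Euclidean plane. -/
noncomputable def cross2 (u v : EuclideanSpace ℝ (Fin 2)) : ℝ := u 0 * v 1 - u 1 * v 0

/-- The vertices `P 0, P 1, …` form a convex polygon listed in clockwise order. -/
def ClockwiseConvexPos {n : ℕ} (P : Fin n → EuclideanSpace ℝ (Fin 2)) : Prop :=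
  ∀ i j k : Fin n, i < j → j < k → cross2 (P j - P i) (P k - P i) < 0

/-!
If four vertices `a, b, c, e` of a convex polygon follow each other clockwise, some angle of the
quadrilateral `abce` is not acute, so moving its vertex to the neighbouring polygon vertex inside
the gap `ab` or `ce` makes one of the diagonals `bc`, `ae` strictly longer. Each move shortens only
one gap, by one, and improves the rank of a distance, so the smaller gap is bounded by the sum of
the two ranks (Fact 3). A level is a family of diagonals `{x, r - x}` with integer `x` once the
indices are unrolled from `ℤ/n` to `ℤ`; applying Fact 3 to its smallest and largest `x` whose
diagonal has length at least `d_k` shows that all such `x` lie in an interval of `2k - 1` integers.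
-/

open Finset RealInnerProductSpace

local notation "ℝ²" => EuclideanSpace ℝ (Fin 2)

section InnerProduct

variable {V : Type*} [NormedAddCommGroup V] [InnerProductSpace ℝ V]

lemma dist_lt_dist_of_inner_sub_nonpos {p q x : V} (hne : q ≠ x) (h : ⟪p - x, q - x⟫ ≤ 0) :
    dist p x < dist p q := by
  have hpos : 0 < ‖q - x‖ := norm_sub_pos_iff.2 hne
  have hcos := norm_sub_sq_real (p - x) (q - x)
  rw [sub_sub_sub_cancel_right] at hcos
  rw [dist_eq_norm, dist_eq_norm, ← sq_lt_sq₀ (norm_nonneg _) (norm_nonneg _)]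
  linarith [pow_pos hpos 2]

end InnerProduct

section CrossProduct

lemma cross2_self (u : ℝ²) : cross2 u u = 0 := by
  simp only [cross2]; ring

lemma cross2_swap (u v : ℝ²) : cross2 v u = -cross2 u v := by
  simp only [cross2]; ring

lemma cross2_sub_rotate (a b c : ℝ²) : cross2 (b - a) (c - a) = cross2 (c - b) (a - b) := by
  simp only [cross2, PiLp.sub_apply]; ring

lemma cross2_sub_sub (a b c : ℝ²) : cross2 (b - a) (c - b) = cross2 (b - a) (c - a) := by
  simp only [cross2, PiLp.sub_apply]; ring

lemma cross2_mul_inner (u v w : ℝ²) :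
    cross2 u v * ⟪v, w⟫ = cross2 w v * ⟪u, v⟫ + cross2 u w * ⟪v, v⟫ := by
  simp only [cross2, PiLp.inner_apply, Fin.sum_univ_two, RCLike.inner_apply, conj_trivial]
  ring

lemma cross2_pos_of_inner_neg {u v w : ℝ²} (huv : cross2 u v < 0) (hvw : cross2 v w < 0)
    (huv' : ⟪u, v⟫ < 0) (hvw' : ⟪v, w⟫ < 0) : 0 < cross2 u w := by
  have key := cross2_mul_inner u v w
  rw [cross2_swap v w] at key
  have hmul : 0 < cross2 u w * ⟪v, v⟫ := by
    linarith [mul_pos_of_neg_of_neg huv hvw', mul_pos_of_neg_of_neg hvw huv']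
  exact pos_of_mul_pos_left hmul real_inner_self_nonneg

lemma exists_inner_nonneg_of_four_clockwise_turns {u v w x : ℝ²} (huv : cross2 u v < 0)
    (hvw : cross2 v w < 0) (hwx : cross2 w x < 0) (hxu : cross2 x u < 0) :
    0 ≤ ⟪u, v⟫ ∨ 0 ≤ ⟪v, w⟫ ∨ 0 ≤ ⟪w, x⟫ ∨ 0 ≤ ⟪x, u⟫ := by
  by_contra! hneg
  obtain ⟨huv', hvw', hwx', hxu'⟩ := hneg
  have huw : 0 < cross2 u w := cross2_pos_of_inner_neg huv hvw huv' hvw'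
  have hwu : 0 < cross2 w u := cross2_pos_of_inner_neg hwx hxu hwx' hxu'
  linarith [cross2_swap u w]

lemma exists_angle_not_acute {a b c e : ℝ²}
    (habc : cross2 (b - a) (c - a) < 0) (hbce : cross2 (c - b) (e - b) < 0)
    (hace : cross2 (c - a) (e - a) < 0) (habe : cross2 (b - a) (e - a) < 0) :
    ⟪b - a, e - a⟫ ≤ 0 ∨ ⟪c - b, a - b⟫ ≤ 0 ∨ ⟪e - c, b - c⟫ ≤ 0 ∨ ⟪a - e, c - e⟫ ≤ 0 := by
  have angle_eq (x y z : ℝ²) : ⟪z - y, x - y⟫ = -⟪y - x, z - y⟫ := by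
    rw [← neg_sub y x, inner_neg_right, real_inner_comm]
  have hcea : cross2 (e - c) (a - e) < 0 := by
    rwa [cross2_sub_sub, ← cross2_sub_rotate]
  have heab : cross2 (a - e) (b - a) < 0 := by
    rwa [cross2_sub_sub, cross2_sub_rotate]
  rcases exists_inner_nonneg_of_four_clockwise_turns ((cross2_sub_sub a b c).trans_lt habc)
    ((cross2_sub_sub b c e).trans_lt hbce) hcea heab with h | h | h | h
  · exact .inr (.inl (by rw [angle_eq]; linarith))
  · exact .inr (.inr (.inl (by rw [angle_eq]; linarith)))
  · exact .inr (.inr (.inr (by rw [angle_eq]; linarith)))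
  · exact .inl (by rw [angle_eq]; linarith)

-- The sign conditions say that `v` lies in the convex cone spanned by `u` and `w`; being products,
-- they cover both orientations.
lemma inner_nonpos_of_mem_cone {u v w : ℝ²} (hvw : 0 ≤ cross2 v w * cross2 u w)
    (huv : 0 < cross2 u v * cross2 u w) (h : ⟪u, v⟫ ≤ 0) : ⟪u, w⟫ ≤ 0 := by
  have key : (cross2 u v * cross2 u w) * ⟪u, w⟫
      = cross2 u w ^ 2 * ⟪u, v⟫ - (cross2 v w * cross2 u w) * ⟪u, u⟫ := by
    have := cross2_mul_inner w u v
    rw [cross2_swap u w, cross2_swap u v, cross2_swap v w, real_inner_comm u w] at this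
    linear_combination cross2 u w * this
  refine nonpos_of_mul_nonpos_right ?_ huv
  rw [key]
  exact sub_nonpos.2 <| (mul_nonpos_of_nonneg_of_nonpos (sq_nonneg _) h).trans
    (mul_nonneg hvw real_inner_self_nonneg)

lemma dist_lt_dist_of_mem_cone {p q r x : ℝ²}
    (hqr : 0 ≤ cross2 (q - x) (r - x) * cross2 (p - x) (r - x))
    (hpq : 0 < cross2 (p - x) (q - x) * cross2 (p - x) (r - x))
    (h : ⟪p - x, q - x⟫ ≤ 0) : dist p x < dist p r := by
  refine dist_lt_dist_of_inner_sub_nonpos ?_ (inner_nonpos_of_mem_cone hqr hpq h)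
  rintro rfl
  simp [cross2] at hpq

end CrossProduct

/-- A sequence of points indexed by `ℤ` that runs `n`-periodically clockwise around a strictly
convex polygon. Unrolling the cyclic order of the vertices in this way lets gaps between vertices
be measured by differences of integers. -/
structure IsConvexCycle (n : ℤ) (Q : ℤ → ℝ²) : Prop where
  periodic : Function.Periodic Q n
  cross_neg : ∀ ⦃x y z : ℤ⦄, x < y → y < z → z < x + n → cross2 (Q y - Q x) (Q z - Q x) < 0

namespace IsConvexCycle

variable {n : ℤ} {Q : ℤ → ℝ²} {x y z a b c e : ℤ}

lemma cross_nonpos (hQ : IsConvexCycle n Q) (hxy : x < y) (hyz : y ≤ z) (hzx : z < x + n) :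
    cross2 (Q y - Q x) (Q z - Q x) ≤ 0 := by
  rcases hyz.eq_or_lt with rfl | hyz
  · exact (cross2_self _).le
  · exact (hQ.cross_neg hxy hyz hzx).le

lemma dist_lt_dist_succ (hQ : IsConvexCycle n Q) (hxy : x < y) (hyz : y < z) (hzx : z < x + n)
    (h : ⟪Q y - Q x, Q z - Q x⟫ ≤ 0) : dist (Q z) (Q x) < dist (Q z) (Q (x + 1)) := by
  have hnext := hQ.cross_neg (show x < x + 1 by lia) (show x + 1 < z by lia) hzx
  have hcone := hQ.cross_nonpos (show x < x + 1 by lia) (show x + 1 ≤ y by lia)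
    (show y < x + n by lia)
  have hyz' := hQ.cross_neg hxy hyz hzx
  rw [real_inner_comm] at h
  refine dist_lt_dist_of_mem_cone ?_ ?_ h <;>
    rw [cross2_swap (Q (x + 1) - Q x) (Q z - Q x)]
  · rw [cross2_swap (Q (x + 1) - Q x) (Q y - Q x), neg_mul_neg]
    exact mul_nonneg_of_nonpos_of_nonpos hcone hnext.le
  · rw [cross2_swap (Q y - Q x) (Q z - Q x), neg_mul_neg]
    exact mul_pos_of_neg_of_neg hyz' hnext

lemma dist_lt_dist_pred (hQ : IsConvexCycle n Q) (hxy : x < y) (hyz : y < z) (hzx : z < x + n)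
    (h : ⟪Q y - Q x, Q z - Q x⟫ ≤ 0) : dist (Q y) (Q x) < dist (Q y) (Q (x - 1)) := by
  rw [← hQ.periodic (x - 1)]
  have hprev := hQ.cross_neg hxy (show y < x - 1 + n by lia) (by lia)
  have hcone := hQ.cross_nonpos (hxy.trans hyz) (show z ≤ x - 1 + n by lia) (by lia)
  exact dist_lt_dist_of_mem_cone (mul_nonneg_of_nonpos_of_nonpos hcone hprev.le)
    (mul_pos_of_neg_of_neg (hQ.cross_neg hxy hyz hzx) hprev) h

lemma exists_longer_diagonal (hQ : IsConvexCycle n Q) (hab : a < b) (hbc : b < c) (hce : c < e)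
    (hea : e < a + n) :
    dist (Q a) (Q e) < dist (Q (a + 1)) (Q e) ∨ dist (Q b) (Q c) < dist (Q (b - 1)) (Q c) ∨
      dist (Q b) (Q c) < dist (Q b) (Q (c + 1)) ∨ dist (Q a) (Q e) < dist (Q a) (Q (e - 1)) := by
  have hangle := exists_angle_not_acute (hQ.cross_neg hab hbc (by lia))
    (hQ.cross_neg hbc hce (by lia)) (hQ.cross_neg (hab.trans hbc) hce hea)
    (hQ.cross_neg hab (hbc.trans hce) hea)
  refine hangle.imp (fun ha => ?_) (.imp (fun hb => ?_) (.imp (fun hc => ?_) (fun he => ?_)))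
  · rw [dist_comm (Q a), dist_comm (Q (a + 1))]
    exact hQ.dist_lt_dist_succ hab (hbc.trans hce) hea ha
  · rw [← hQ.periodic a] at hb
    rw [dist_comm (Q b), dist_comm (Q (b - 1))]
    exact hQ.dist_lt_dist_pred hbc (by lia) (by lia) hb
  · rw [← hQ.periodic b] at hc ⊢
    exact hQ.dist_lt_dist_succ hce (by lia) (by lia) hc
  · rw [← hQ.periodic a, ← hQ.periodic c] at he
    rw [← hQ.periodic a]
    exact hQ.dist_lt_dist_pred hea (by lia) (by lia) he

end IsConvexCycle

section Rank

variable {α : Type*} [LinearOrder α] {D : Finset α} {s t : α}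

/-- The number of elements of `D` that are at least `t`. When `D` is the set of distances of a
polygon, the `k`-th largest distance `d_k` has rank `k`. -/
def rankFromTop (D : Finset α) (t : α) : ℕ := #{s ∈ D | t ≤ s}

lemma rankFromTop_anti (D : Finset α) : Antitone (rankFromTop D) := fun _ _ hst =>
  card_le_card <| monotone_filter_right D fun _ _ => hst.trans

lemma rankFromTop_pos (ht : t ∈ D) : 0 < rankFromTop D t :=
  card_pos.2 ⟨t, mem_filter.2 ⟨ht, le_rfl⟩⟩

lemma rankFromTop_lt_of_lt (hs : s ∈ D) (hst : s < t) : rankFromTop D t < rankFromTop D s := by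
  refine card_lt_card ((ssubset_iff_of_subset ?_).2 ⟨s, ?_, ?_⟩)
  · exact monotone_filter_right D fun _ _ => hst.le.trans
  · exact mem_filter.2 ⟨hs, le_rfl⟩
  · exact fun h => hst.not_ge (mem_filter.1 h).2

lemma rankFromTop_image_Icc_le {d : ℕ → α} {N k : ℕ} (hd : StrictAntiOn d (Set.Icc 1 N))
    (hk : k ∈ Set.Icc 1 N) : rankFromTop ((Icc 1 N).image d) (d k) ≤ k := by
  have hsub : {s ∈ (Icc 1 N).image d | d k ≤ s} ⊆ (Icc 1 k).image d := by
    intro s hs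
    obtain ⟨hs, hks⟩ := mem_filter.1 hs
    obtain ⟨i, hi, rfl⟩ := mem_image.1 hs
    have hik : i ≤ k := (hd.le_iff_ge hk (by simpa using hi)).1 hks
    exact mem_image_of_mem d (mem_Icc.2 ⟨(mem_Icc.1 hi).1, hik⟩)
  calc rankFromTop ((Icc 1 N).image d) (d k) ≤ #((Icc 1 k).image d) := card_le_card hsub
    _ ≤ #(Icc 1 k) := card_image_le
    _ = k := by simp

end Rank

namespace IsConvexCycle

variable {n : ℤ} {Q : ℤ → ℝ²} {D : Finset ℝ}

-- This is Fact 3: a gap `b - a` has `b - a - 1` vertices strictly inside.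
theorem min_gap_add_two_le_rank_add_rank (hQ : IsConvexCycle n Q)
    (hD : ∀ x y : ℤ, x < y → y < x + n → dist (Q x) (Q y) ∈ D)
    {a b c e : ℤ} (hab : a ≤ b) (hbc : b < c) (hce : c ≤ e) (hea : e < a + n) :
    min (b - a) (e - c) + 2
      ≤ rankFromTop D (dist (Q b) (Q c)) + rankFromTop D (dist (Q a) (Q e)) := by
  have hbcD := hD b c hbc (by lia)
  have haeD := hD a e (by lia) hea
  have hpos := rankFromTop_pos hbcD
  have hpos' := rankFromTop_pos haeD
  rcases hab.eq_or_lt with rfl | hab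
  · lia
  rcases hce.eq_or_lt with rfl | hce
  · lia
  rcases hQ.exists_longer_diagonal hab hbc hce hea with h | h | h | h
  · have := rankFromTop_lt_of_lt haeD h
    have := min_gap_add_two_le_rank_add_rank hQ hD (show a + 1 ≤ b by lia) hbc hce.le (by lia)
    lia
  · have := rankFromTop_lt_of_lt hbcD h
    have := min_gap_add_two_le_rank_add_rank hQ hD (show a ≤ b - 1 by lia) (by lia) hce.le hea
    lia
  · have := rankFromTop_lt_of_lt hbcD h
    have := min_gap_add_two_le_rank_add_rank hQ hD hab.le (by lia) (show c + 1 ≤ e by lia) hea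
    lia
  · have := rankFromTop_lt_of_lt haeD h
    have := min_gap_add_two_le_rank_add_rank hQ hD hab.le hbc (show c ≤ e - 1 by lia) (by lia)
    lia
termination_by (b - a + (e - c)).toNat

theorem card_level_le (hQ : IsConvexCycle n Q)
    (hD : ∀ x y : ℤ, x < y → y < x + n → dist (Q x) (Q y) ∈ D) {r : ℤ} {t : ℝ} {S : Finset ℤ}
    (hS : ∀ x ∈ S, x < r - x ∧ r - x < x + n ∧ t ≤ dist (Q x) (Q (r - x))) :
    #S ≤ 2 * rankFromTop D t - 1 := by
  rcases S.eq_empty_or_nonempty with rfl | hne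
  · simp
  set a := S.min' hne
  set b := S.max' hne
  obtain ⟨-, hla, hta⟩ := hS a (S.min'_mem hne)
  obtain ⟨hb, -, htb⟩ := hS b (S.max'_mem hne)
  have hab : a ≤ b := S.min'_le_max' hne
  have hcard : #S ≤ #(Icc a b) :=
    card_le_card fun x hx => mem_Icc.2 ⟨S.min'_le x hx, S.le_max' x hx⟩
  have hfact := hQ.min_gap_add_two_le_rank_add_rank hD hab hb (sub_le_sub_left hab r) hla
  have hrank_a := rankFromTop_anti D hta
  have hrank_b := rankFromTop_anti D htb
  rw [Int.card_Icc] at hcard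
  lia

end IsConvexCycle

section CyclicExtension

variable {α : Type*} {n : ℕ} [NeZero n]

/-- The `n`-periodic extension to `ℤ` of a family indexed by `Fin n`, used to turn the vertex list
of a polygon into a convex cycle. -/
def cyclicExtension (P : Fin n → α) (x : ℤ) : α := P ⟨x.natMod n, Int.natMod_lt (NeZero.ne n)⟩

lemma cyclicExtension_periodic (P : Fin n → α) :
    Function.Periodic (cyclicExtension P) (n : ℤ) := fun x => by
  simp [cyclicExtension, Int.natMod]

lemma cyclicExtension_coe (P : Fin n → α) (i : Fin n) : cyclicExtension P (i : ℤ) = P i := by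
  have hi : (i : ℤ) % n = i := Int.emod_eq_of_lt (by lia) (Int.ofNat_lt.2 i.isLt)
  simp [cyclicExtension, Int.natMod, hi]

lemma exists_ne_cyclicExtension_eq (P : Fin n → α) {x y : ℤ} (hxy : x < y) (hyx : y < x + n) :
    ∃ u v : Fin n, u ≠ v ∧ cyclicExtension P x = P u ∧ cyclicExtension P y = P v := by
  refine ⟨_, _, fun huv => ?_, rfl, rfl⟩
  have hn : (n : ℤ) ≠ 0 := NeZero.ne _
  have hmod : x % n = y % n := by
    have h : (x % n).toNat = (y % n).toNat := congrArg Fin.val huv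
    have hx := Int.emod_nonneg x hn
    have hy := Int.emod_nonneg y hn
    lia
  have hdvd : (n : ℤ) ∣ y - x := Int.ModEq.dvd hmod
  have := Int.le_of_dvd (by lia) hdvd
  lia

end CyclicExtension

namespace ClockwiseConvexPos

variable {n : ℕ} [NeZero n] {P : Fin n → ℝ²}

lemma cross_cyclicExtension_neg_of_lt (hP : ClockwiseConvexPos P) {x y z : ℤ} (hx : 0 ≤ x)
    (hxy : x < y) (hyz : y < z) (hz : z < n) :
    cross2 (cyclicExtension P y - cyclicExtension P x)
      (cyclicExtension P z - cyclicExtension P x) < 0 := by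
  lift x to ℕ using hx
  lift y to ℕ using by lia
  lift z to ℕ using by lia
  have h := hP ⟨x, by lia⟩ ⟨y, by lia⟩ ⟨z, by lia⟩ (Fin.mk_lt_mk.2 (by lia))
    (Fin.mk_lt_mk.2 (by lia))
  simpa only [← cyclicExtension_coe] using h

lemma cross_cyclicExtension_neg (hP : ClockwiseConvexPos P) {x y z : ℤ} (hx : 0 ≤ x)
    (hxn : x < n) (hxy : x < y) (hyz : y < z) (hzx : z < x + n) :
    cross2 (cyclicExtension P y - cyclicExtension P x)
      (cyclicExtension P z - cyclicExtension P x) < 0 := by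
  have hper := (cyclicExtension_periodic P).sub_eq
  rcases lt_or_ge z n with hz | hz
  · exact hP.cross_cyclicExtension_neg_of_lt hx hxy hyz hz
  rw [← hper z]
  rcases lt_or_ge y n with hy | hy
  · rw [← cross2_sub_rotate]
    exact hP.cross_cyclicExtension_neg_of_lt (by lia) (by lia) hxy hy
  · rw [← hper y, cross2_sub_rotate]
    exact hP.cross_cyclicExtension_neg_of_lt (by lia) (by lia) (by lia) hxn

theorem isConvexCycle (hP : ClockwiseConvexPos P) : IsConvexCycle n (cyclicExtension P) where
  periodic := cyclicExtension_periodic P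
  cross_neg x y z hxy hyz hzx := by
    have hn : (0 : ℤ) < n := Int.natCast_pos.2 (NeZero.pos n)
    have hper (w : ℤ) := (cyclicExtension_periodic P).sub_zsmul_eq (x / n) (x := w)
    have hx : x % n = x - x / n * n := by rw [mul_comm, ← Int.emod_def]
    have hx0 := Int.emod_nonneg x hn.ne'
    have hxn := Int.emod_lt_of_pos x hn
    rw [← hper x, ← hper y, ← hper z]
    simp only [smul_eq_mul]
    exact hP.cross_cyclicExtension_neg (by lia) (by lia) (by lia) (by lia) (by lia)

end ClockwiseConvexPos

section Level

variable {n r : ℕ} {p : Fin n × Fin n}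

/-- The integer `x` that stands for the diagonal `p` of the level `L_r`: modulo `n`, the endpoints
of `p` are `x` and `r - x`. The branches are chosen so that `x < r - x < x + n`. -/
def levelIndex (r : ℕ) (p : Fin n × Fin n) : ℤ :=
  if p.1.val + p.2.val = r then p.1 else p.2 - n

lemma val_add_val_eq_or_eq_add (h : (p.1.val + p.2.val) % n = r) :
    p.1.val + p.2.val = r ∨ p.1.val + p.2.val = r + n := by
  rcases lt_or_ge (p.1.val + p.2.val) n with hlt | hge
  · exact .inl (by rwa [Nat.mod_eq_of_lt hlt] at h)
  · rw [Nat.mod_eq_sub_mod hge, Nat.mod_eq_of_lt (by lia)] at h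
    exact .inr (by lia)

lemma levelIndex_injOn :
    Set.InjOn (levelIndex r) {p : Fin n × Fin n | (p.1.val + p.2.val) % n = r} := by
  intro p hp q hq hpq
  have hp' := val_add_val_eq_or_eq_add hp
  have hq' := val_add_val_eq_or_eq_add hq
  unfold levelIndex at hpq
  refine Prod.ext (Fin.ext ?_) (Fin.ext ?_) <;> split_ifs at hpq <;> lia

lemma levelIndex_lt_sub (hlt : p.1 < p.2) (h : (p.1.val + p.2.val) % n = r) :
    levelIndex r p < r - levelIndex r p ∧ r - levelIndex r p < levelIndex r p + n := by
  have hsum := val_add_val_eq_or_eq_add h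
  unfold levelIndex
  split_ifs <;> lia

lemma dist_cyclicExtension_levelIndex {X : Type*} [PseudoMetricSpace X] [NeZero n]
    (P : Fin n → X) (h : (p.1.val + p.2.val) % n = r) :
    dist (cyclicExtension P (levelIndex r p)) (cyclicExtension P (r - levelIndex r p))
      = dist (P p.1) (P p.2) := by
  have hsum := val_add_val_eq_or_eq_add h
  unfold levelIndex
  split_ifs with hr
  · rw [show (r : ℤ) - p.1 = p.2 by lia, cyclicExtension_coe, cyclicExtension_coe]
  · rw [show (r : ℤ) - (p.2 - n) = p.1 by lia, (cyclicExtension_periodic P).sub_eq,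
      cyclicExtension_coe, cyclicExtension_coe, dist_comm]

end Level

theorem ClockwiseConvexPos.card_level_le {n : ℕ} [NeZero n] {P : Fin n → ℝ²}
    (hP : ClockwiseConvexPos P) {D : Finset ℝ} (hD : ∀ u v : Fin n, u ≠ v → dist (P u) (P v) ∈ D)
    (t : ℝ) (r : ℕ) :
    #{p : Fin n × Fin n | p.1 < p.2 ∧ (p.1.val + p.2.val) % n = r ∧ t ≤ dist (P p.1) (P p.2)}
      ≤ 2 * rankFromTop D t - 1 := by
  have hdist (x y : ℤ) (hxy : x < y) (hyx : y < x + n) :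
      dist (cyclicExtension P x) (cyclicExtension P y) ∈ D := by
    obtain ⟨u, v, huv, hu, hv⟩ := exists_ne_cyclicExtension_eq P hxy hyx
    rw [hu, hv]
    exact hD u v huv
  rw [← card_image_of_injOn (f := levelIndex r)
    (levelIndex_injOn.mono fun p hp => (mem_filter.1 hp).2.2.1)]
  refine hP.isConvexCycle.card_level_le hdist (r := r) fun x hx => ?_
  obtain ⟨p, hp, rfl⟩ := mem_image.1 hx
  obtain ⟨hlt, hsum, ht⟩ := (mem_filter.1 hp).2
  obtain ⟨hlow, hhigh⟩ := levelIndex_lt_sub hlt hsum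
  exact ⟨hlow, hhigh, ht.trans_eq (dist_cyclicExtension_levelIndex P hsum).symm⟩

/-- In any level `L_r` (diagonals `a_j a_m` with `j + m ≡ r (mod n)`), at most `2k - 1`
diagonals have length at least `d_k`, the `k`-th largest pairwise distance. -/
theorem stmt8 {n : ℕ} (P : Fin n → EuclideanSpace ℝ (Fin 2)) (hP : ClockwiseConvexPos P)
    (d : ℕ → ℝ) (N : ℕ) (hanti : StrictAntiOn d (Set.Icc 1 N))
    (himg : d '' Set.Icc 1 N = {r : ℝ | ∃ u v : Fin n, u ≠ v ∧ dist (P u) (P v) = r})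
    (k : ℕ) (hk : k ∈ Set.Icc 1 N) (r : ℕ) :
    ((Finset.univ : Finset (Fin n × Fin n)).filter
      (fun p => p.1 < p.2 ∧ (p.1.val + p.2.val) % n = r ∧ d k ≤ dist (P p.1) (P p.2))).card
      ≤ 2 * k - 1 := by
  rcases eq_or_ne n 0 with rfl | hn
  · simp
  have : NeZero n := ⟨hn⟩
  have hD (u v : Fin n) (huv : u ≠ v) : dist (P u) (P v) ∈ (Icc 1 N).image d := by
    have hmem : dist (P u) (P v) ∈ d '' Set.Icc 1 N := himg ▸ ⟨u, v, huv, rfl⟩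
    simpa using hmem
  have hlevel := hP.card_level_le hD (d k) r
  have hrank := rankFromTop_image_Icc_le hanti hk
  lia
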